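/- Let ρ_AB be a density matrix on a bipartite space and α ∈ [1/2,1)∪(1,∞). Then H_α^↑(A|B)_ρ ≤ H̃_α^↑(A|B)_ρ ≤ H^↑_{2−1/α}(A|B)_ρ, where H_γ^↑(A|B)_ρ (resp. H̃_γ^↑(A|B)_ρ) is the supremum over density matrices σ_B of −D_γ(ρ_AB ‖ 1_A ⊗ σ_B) (resp. −D̃_γ(ρ_AB ‖ 1_A ⊗ σ_B)); for γ > 1 the suprema are over σ_B whose kernel is contained in that of ρ_B. -/

import Mathlib

open scoped Kronecker ComplexOrder
open Matrix

/-- Real power of a matrix via the functional calculus on the eigenvalues,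
with the convention `0 ^ t = 0` (powers taken on the support). -/
noncomputable def matRpow {n : Type*} [Fintype n] [DecidableEq n]
    (A : Matrix n n ℂ) (t : ℝ) : Matrix n n ℂ :=
  if hA : A.IsHermitian then
    (hA.eigenvectorUnitary : Matrix n n ℂ) *
      Matrix.diagonal (fun i =>
        ((if hA.eigenvalues i = 0 then (0 : ℝ) else (hA.eigenvalues i) ^ t : ℝ) : ℂ)) *
      star (hA.eigenvectorUnitary : Matrix n n ℂ)
  else 0

/-- Matrix logarithm on the support. -/
noncomputable def matLog {n : Type*} [Fintype n] [DecidableEq n]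
    (A : Matrix n n ℂ) : Matrix n n ℂ :=
  if hA : A.IsHermitian then
    (hA.eigenvectorUnitary : Matrix n n ℂ) *
      Matrix.diagonal (fun i => ((Real.log (hA.eigenvalues i) : ℝ) : ℂ)) *
      star (hA.eigenvectorUnitary : Matrix n n ℂ)
  else 0

/-- Partial trace over the first tensor factor. -/
noncomputable def trFst {a b : Type*} [Fintype a] (M : Matrix (a × b) (a × b) ℂ) :
    Matrix b b ℂ :=
  Matrix.of fun j j' => ∑ i, M (i, j) (i, j')

/-- Partial trace over the second tensor factor. -/
noncomputable def trSnd {a b : Type*} [Fintype b] (M : Matrix (a × b) (a × b) ℂ) :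
    Matrix a a ℂ :=
  Matrix.of fun i i' => ∑ j, M (i, j) (i', j)

/-- Partial trace over the third factor of a tripartite system. -/
noncomputable def trThird {a b c : Type*} [Fintype c]
    (M : Matrix (a × b × c) (a × b × c) ℂ) : Matrix (a × b) (a × b) ℂ :=
  Matrix.of fun p p' => ∑ k, M (p.1, p.2, k) (p'.1, p'.2, k)

/-- Partial trace over the second factor of a tripartite system. -/
noncomputable def trSecond {a b c : Type*} [Fintype b]
    (M : Matrix (a × b × c) (a × b × c) ℂ) : Matrix (a × c) (a × c) ℂ :=
  Matrix.of fun p p' => ∑ j, M (p.1, j, p.2) (p'.1, j, p'.2)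

/-- Partial trace over the first two factors of a tripartite system. -/
noncomputable def trFstSnd {a b c : Type*} [Fintype a] [Fintype b]
    (M : Matrix (a × b × c) (a × b × c) ℂ) : Matrix c c ℂ :=
  Matrix.of fun k k' => ∑ i, ∑ j, M (i, j, k) (i, j, k')

/-- Partial trace over the first and third factors of a tripartite system. -/
noncomputable def trFstThird {a b c : Type*} [Fintype a] [Fintype c]
    (M : Matrix (a × b × c) (a × b × c) ℂ) : Matrix b b ℂ :=
  Matrix.of fun j j' => ∑ i, ∑ k, M (i, j, k) (i, j', k)

/-- Quantum Rényi relative entropy `D_α(ρ‖σ)`. -/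
noncomputable def renyiDiv {n : Type*} [Fintype n] [DecidableEq n]
    (α : ℝ) (ρ σ : Matrix n n ℂ) : ℝ :=
  (α - 1)⁻¹ * Real.log ((matRpow ρ α * matRpow σ (1 - α)).trace.re)

/-- Sandwiched quantum Rényi divergence `D̃_α(ρ‖σ)`. -/
noncomputable def sandwichedRenyiDiv {n : Type*} [Fintype n] [DecidableEq n]
    (α : ℝ) (ρ σ : Matrix n n ℂ) : ℝ :=
  (α - 1)⁻¹ * Real.log
    ((matRpow (matRpow σ ((1 - α) / (2 * α)) * ρ * matRpow σ ((1 - α) / (2 * α))) α).trace.re)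

/-- Quantum relative entropy `D(ρ‖σ)`. -/
noncomputable def relEntropy {n : Type*} [Fintype n] [DecidableEq n]
    (ρ σ : Matrix n n ℂ) : ℝ :=
  (ρ * (matLog ρ - matLog σ)).trace.re

/-- `H_γ^↑(A|B)_ρ`: supremum over density matrices `σ_B` of `−D_γ(ρ_AB ‖ 1_A ⊗ σ_B)`
(for `γ > 1` over those `σ_B` whose kernel is contained in that of `ρ_B`). -/
noncomputable def condRenyiUp {a b : Type*} [Fintype a] [DecidableEq a] [Fintype b] [DecidableEq b]
    (gamma : ℝ) (ρ : Matrix (a × b) (a × b) ℂ) : ℝ :=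
  sSup {x : ℝ | ∃ σ : Matrix b b ℂ, σ.PosSemidef ∧ σ.trace = 1 ∧
    (1 < gamma → LinearMap.ker σ.mulVecLin ≤ LinearMap.ker (trFst ρ).mulVecLin) ∧
    x = -renyiDiv gamma ρ ((1 : Matrix a a ℂ) ⊗ₖ σ)}

/-- `H̃_γ^↑(A|B)_ρ`: supremum over density matrices `σ_B` of `−D̃_γ(ρ_AB ‖ 1_A ⊗ σ_B)`
(for `γ > 1` over those `σ_B` whose kernel is contained in that of `ρ_B`). -/
noncomputable def condSandwichedRenyiUp {a b : Type*} [Fintype a] [DecidableEq a] [Fintype b] [DecidableEq b]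
    (gamma : ℝ) (ρ : Matrix (a × b) (a × b) ℂ) : ℝ :=
  sSup {x : ℝ | ∃ σ : Matrix b b ℂ, σ.PosSemidef ∧ σ.trace = 1 ∧
    (1 < gamma → LinearMap.ker σ.mulVecLin ≤ LinearMap.ker (trFst ρ).mulVecLin) ∧
    x = -sandwichedRenyiDiv gamma ρ ((1 : Matrix a a ℂ) ⊗ₖ σ)}

section Helpers

open scoped Matrix.Norms.L2Operator

/-- Weighted Hölder inequality for finite sums. -/
lemma aux_holder {ι : Type*} (S : Finset ι) (w x y : ι → ℝ) (hw : ∀ i, 0 ≤ w i)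
    (hx : ∀ i, 0 ≤ x i) (hy : ∀ i, 0 ≤ y i) (u v : ℝ) (hu : 0 ≤ u) (hv : 0 ≤ v) (huv : u + v = 1) :
    ∑ i ∈ S, w i * (x i ^ u * y i ^ v) ≤ (∑ i ∈ S, w i * x i) ^ u * (∑ i ∈ S, w i * y i) ^ v := by
  rcases hu.eq_or_lt with rfl | hu'
  · have : v = 1 := by linarith
    subst this
    simp
  rcases hv.eq_or_lt with rfl | hv'
  · have : u = 1 := by linarith
    subst this
    simp
  have hpq : (1 / u).HolderConjugate (1 / v) := by
    rw [Real.holderConjugate_iff]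
    refine ⟨by rw [lt_div_iff₀ hu']; linarith, by simpa using huv⟩
  have h := Real.inner_le_Lp_mul_Lq_of_nonneg S hpq (f := fun i => (w i * x i) ^ u)
    (g := fun i => (w i * y i) ^ v)
    (fun i _ => Real.rpow_nonneg (mul_nonneg (hw i) (hx i)) _)
    (fun i _ => Real.rpow_nonneg (mul_nonneg (hw i) (hy i)) _)
  have e1 : ∀ i, ((w i * x i) ^ u) ^ (1 / u) = w i * x i := fun i => by
    rw [← Real.rpow_mul (mul_nonneg (hw i) (hx i)), mul_one_div_cancel hu'.ne', Real.rpow_one]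
  have e2 : ∀ i, ((w i * y i) ^ v) ^ (1 / v) = w i * y i := fun i => by
    rw [← Real.rpow_mul (mul_nonneg (hw i) (hy i)), mul_one_div_cancel hv'.ne', Real.rpow_one]
  simp only [e1, e2, one_div_one_div] at h
  refine le_trans (le_of_eq ?_) h
  refine Finset.sum_congr rfl fun i _ => ?_
  rw [Real.mul_rpow (hw i) (hx i), Real.mul_rpow (hw i) (hy i)]
  have : w i = w i ^ u * w i ^ v := by
    rw [← Real.rpow_add_of_nonneg (hw i) hu hv, huv, Real.rpow_one]
  conv_lhs => rw [this]
  ring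

/-- Hölder inequality with doubly substochastic weights. -/
lemma aux_holder2 {n m : Type*} [Fintype n] [Fintype m] (w : n → m → ℝ) (x : n → ℝ) (y : m → ℝ)
    (hw : ∀ i j, 0 ≤ w i j) (hr : ∀ i, ∑ j, w i j ≤ 1) (hc : ∀ j, ∑ i, w i j ≤ 1)
    (hx : ∀ i, 0 ≤ x i) (hy : ∀ i, 0 ≤ y i) (u v : ℝ) (hu : 0 ≤ u) (hv : 0 ≤ v) (huv : u + v = 1) :
    ∑ i, ∑ j, w i j * (x i ^ u * y j ^ v) ≤ (∑ i, x i) ^ u * (∑ j, y j) ^ v := by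
  have h := aux_holder (Finset.univ : Finset (n × m)) (fun p => w p.1 p.2) (fun p => x p.1)
    (fun p => y p.2) (fun p => hw _ _) (fun p => hx _) (fun p => hy _) u v hu hv huv
  rw [Fintype.sum_prod_type] at h
  refine h.trans ?_
  refine mul_le_mul (Real.rpow_le_rpow ?_ ?_ hu) (Real.rpow_le_rpow ?_ ?_ hv) ?_ ?_
  · exact Finset.sum_nonneg fun p _ => mul_nonneg (hw _ _) (hx _)
  · rw [Fintype.sum_prod_type]
    refine Finset.sum_le_sum fun i _ => ?_
    simp only
    rw [← Finset.sum_mul]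
    exact mul_le_of_le_one_left (hx i) (hr i)
  · exact Finset.sum_nonneg fun p _ => mul_nonneg (hw _ _) (hy _)
  · rw [Fintype.sum_prod_type_right]
    refine Finset.sum_le_sum fun i _ => ?_
    simp only
    rw [← Finset.sum_mul]
    exact mul_le_of_le_one_left (hy i) (hc i)
  · exact Real.rpow_nonneg (Finset.sum_nonneg fun p _ => mul_nonneg (hw _ _) (hy _)) _
  · exact Real.rpow_nonneg (Finset.sum_nonneg fun p _ => hx _) _

/-- Reverse Hölder inequality with doubly stochastic weights. -/
lemma aux_rev_holder {n m : Type*} [Fintype n] [Fintype m] (w : n → m → ℝ) (x : n → ℝ) (y : m → ℝ)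
    (hw : ∀ i j, 0 ≤ w i j) (hr : ∀ i, ∑ j, w i j = 1) (hc : ∀ j, ∑ i, w i j = 1)
    (hx : ∀ i, 0 ≤ x i) (hy : ∀ i, 0 ≤ y i) (θ : ℝ) (h0 : 0 < θ) (h1 : θ < 1)
    (hsupp : ∀ i j, y j = 0 → w i j * x i = 0) :
    ∑ i, x i ^ θ ≤ (∑ i, ∑ j, w i j * (x i * (if y j = 0 then 0 else y j ^ (1 - 1 / θ)))) ^ θ
      * (∑ j, y j) ^ (1 - θ) := by
  have hg : ∀ j, 0 ≤ (if y j = 0 then 0 else y j ^ (1 - 1 / θ)) := fun j => by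
    split_ifs
    · exact le_rfl
    · exact Real.rpow_nonneg (hy j) _
  have h := aux_holder (Finset.univ : Finset (n × m)) (fun p => w p.1 p.2)
    (fun p => x p.1 * (if y p.2 = 0 then 0 else y p.2 ^ (1 - 1 / θ)))
    (fun p => y p.2) (fun p => hw _ _) (fun p => mul_nonneg (hx _) (hg _)) (fun p => hy _)
    θ (1 - θ) h0.le (by linarith) (by ring)
  have e3 : ∑ p : n × m, w p.1 p.2 * y p.2 = ∑ j, y j := by
    rw [Fintype.sum_prod_type_right]
    refine Finset.sum_congr rfl fun j _ => ?_
    simp only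
    rw [← Finset.sum_mul, hc, one_mul]
  rw [e3] at h
  simp only [Fintype.sum_prod_type] at h
  refine le_trans (le_of_eq ?_) h
  refine Finset.sum_congr rfl fun i _ => ?_
  have e4 : x i ^ θ = ∑ j, w i j * x i ^ θ := by rw [← Finset.sum_mul, hr, one_mul]
  rw [e4]
  refine Finset.sum_congr rfl fun j _ => ?_
  by_cases hj : y j = 0
  · rcases mul_eq_zero.1 (hsupp i j hj) with h | h
    · simp [h]
    · simp [h, Real.zero_rpow h0.ne']
  · rw [if_neg hj]
    have hj' : 0 < y j := lt_of_le_of_ne (hy j) (Ne.symm hj)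
    rw [Real.mul_rpow (hx i) (Real.rpow_nonneg (hy j) _), ← Real.rpow_mul (hy j), mul_assoc (x i ^ θ),
      ← Real.rpow_add hj']
    have : (1 - 1 / θ) * θ + (1 - θ) = 0 := by field_simp; ring
    rw [this, Real.rpow_zero, mul_one]

variable {n : Type*} [Fintype n] [DecidableEq n]

/-- Functional calculus with complex-valued functions. -/
noncomputable def fc {A : Matrix n n ℂ} (hA : A.IsHermitian) (f : ℝ → ℂ) : Matrix n n ℂ :=
  (hA.eigenvectorUnitary : Matrix n n ℂ) * Matrix.diagonal (fun i => f (hA.eigenvalues i)) *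
      star (hA.eigenvectorUnitary : Matrix n n ℂ)

/-- Complex powers on the support. -/
noncomputable def pw (z : ℂ) (x : ℝ) : ℂ := if x = 0 then 0 else (x : ℂ) ^ z

lemma ev_star_mul {A : Matrix n n ℂ} (hA : A.IsHermitian) :
    star (hA.eigenvectorUnitary : Matrix n n ℂ) * (hA.eigenvectorUnitary : Matrix n n ℂ) = 1 :=
  Unitary.coe_star_mul_self _

lemma ev_mul_star {A : Matrix n n ℂ} (hA : A.IsHermitian) :
    (hA.eigenvectorUnitary : Matrix n n ℂ) * star (hA.eigenvectorUnitary : Matrix n n ℂ) = 1 :=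
  Unitary.coe_mul_star_self _

lemma fc_mul {A : Matrix n n ℂ} (hA : A.IsHermitian) (f g : ℝ → ℂ) :
    fc hA f * fc hA g = fc hA (fun x => f x * g x) := by
  unfold fc
  have h : ∀ (U D E V : Matrix n n ℂ), V * U = 1 → U * D * V * (U * E * V) = U * (D * E) * V := by
    intro U D E V h
    calc U * D * V * (U * E * V) = U * D * (V * U) * E * V := by noncomm_ring
      _ = _ := by rw [h]; noncomm_ring
  rw [h _ _ _ _ (ev_star_mul hA), Matrix.diagonal_mul_diagonal]

lemma fc_one {A : Matrix n n ℂ} (hA : A.IsHermitian) : fc hA (fun _ => 1) = 1 := by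
  unfold fc
  rw [Matrix.diagonal_one, mul_one, ev_mul_star]

lemma fc_id {A : Matrix n n ℂ} (hA : A.IsHermitian) : fc hA (fun x => (x : ℂ)) = A := by
  conv_rhs => rw [hA.spectral_theorem]
  rfl

lemma fc_conjTranspose {A : Matrix n n ℂ} (hA : A.IsHermitian) (f : ℝ → ℂ) :
    (fc hA f)ᴴ = fc hA (fun x => star (f x)) := by
  unfold fc
  simp only [Matrix.star_eq_conjTranspose, Matrix.conjTranspose_mul, Matrix.conjTranspose_conjTranspose,
    Matrix.diagonal_conjTranspose, mul_assoc]
  rfl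

lemma fc_congr {A : Matrix n n ℂ} (hA : A.IsHermitian) {f g : ℝ → ℂ}
    (h : ∀ i, f (hA.eigenvalues i) = g (hA.eigenvalues i)) : fc hA f = fc hA g := by
  unfold fc
  simp only [h]

lemma fc_trace {A : Matrix n n ℂ} (hA : A.IsHermitian) (f : ℝ → ℂ) :
    (fc hA f).trace = ∑ i, f (hA.eigenvalues i) := by
  unfold fc
  rw [Matrix.trace_mul_comm, ← mul_assoc, ev_star_mul, one_mul, Matrix.trace_diagonal]

lemma fc_pw_mul {A : Matrix n n ℂ} (hA : A.IsHermitian) (z w : ℂ) :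
    fc hA (pw z) * fc hA (pw w) = fc hA (pw (z + w)) := by
  rw [fc_mul]
  congr 1
  ext x
  unfold pw
  split_ifs with h
  · simp
  · rw [Complex.cpow_add _ _ (by exact_mod_cast h)]

lemma fc_pw_one {A : Matrix n n ℂ} (hA : A.IsHermitian) : fc hA (pw 1) = A := by
  conv_rhs => rw [← fc_id hA]
  congr 1
  ext x
  unfold pw
  split_ifs with h <;> simp [h]

lemma pw_ofReal {x : ℝ} (hx : 0 ≤ x) (t : ℝ) :
    pw t x = ((if x = 0 then 0 else x ^ t : ℝ) : ℂ) := by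
  unfold pw
  split_ifs with h
  · simp
  · rw [Complex.ofReal_cpow hx]

lemma fc_pw_real_conjTranspose {A : Matrix n n ℂ} (hA : A.PosSemidef) (t : ℝ) :
    (fc hA.1 (pw t))ᴴ = fc hA.1 (pw t) := by
  rw [fc_conjTranspose]
  refine fc_congr _ fun i => ?_
  rw [pw_ofReal (hA.eigenvalues_nonneg i)]
  exact Complex.conj_ofReal _

lemma matRpow_eq {A : Matrix n n ℂ} (hA : A.PosSemidef) (t : ℝ) :
    matRpow A t = fc hA.1 (pw t) := by
  unfold matRpow
  rw [dif_pos hA.1]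
  unfold fc
  simp only [pw_ofReal (hA.eigenvalues_nonneg _)]

lemma pw_norm {x : ℝ} (hx : 0 ≤ x) (z : ℂ) : ‖pw z x‖ = if x = 0 then 0 else x ^ z.re := by
  unfold pw
  split_ifs with h
  · simp
  · rw [Complex.norm_cpow_eq_rpow_re_of_pos (lt_of_le_of_ne hx (Ne.symm h))]

lemma pw_norm_le {x : ℝ} (hx : 0 ≤ x) (z : ℂ) : ‖pw z x‖ ≤ x ^ z.re := by
  rw [pw_norm hx]
  split_ifs with h
  · exact Real.rpow_nonneg hx _
  · exact le_rfl

lemma ctr_unitary {A : Matrix n n ℂ} (hA : A.IsHermitian) :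
    ‖(hA.eigenvectorUnitary : Matrix n n ℂ)‖ ≤ 1 := by
  have h := Matrix.l2_opNorm_conjTranspose_mul_self (hA.eigenvectorUnitary : Matrix n n ℂ)
  rw [← Matrix.star_eq_conjTranspose, ev_star_mul] at h
  have h1 : ‖(1 : Matrix n n ℂ)‖ ≤ 1 := by
    rw [← Matrix.diagonal_one, Matrix.l2_opNorm_diagonal]
    exact (pi_norm_le_iff_of_nonneg zero_le_one).2 fun i => by simp
  nlinarith [norm_nonneg (hA.eigenvectorUnitary : Matrix n n ℂ)]

lemma ctr_star {K : Matrix n n ℂ} (hK : ‖K‖ ≤ 1) : ‖star K‖ ≤ 1 := by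
  rw [Matrix.star_eq_conjTranspose, Matrix.l2_opNorm_conjTranspose]; exact hK

lemma ctr_mul {K L : Matrix n n ℂ} (hK : ‖K‖ ≤ 1) (hL : ‖L‖ ≤ 1) : ‖K * L‖ ≤ 1 :=
  (Matrix.l2_opNorm_mul K L).trans (mul_le_one₀ hK (norm_nonneg _) hL)

lemma ctr_fc {A : Matrix n n ℂ} (hA : A.IsHermitian) (f : ℝ → ℂ)
    (hf : ∀ i, ‖f (hA.eigenvalues i)‖ ≤ 1) : ‖fc hA f‖ ≤ 1 := by
  unfold fc
  refine ctr_mul (ctr_mul (ctr_unitary hA) ?_) (ctr_star (ctr_unitary hA))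
  rw [Matrix.l2_opNorm_diagonal]
  exact (pi_norm_le_iff_of_nonneg zero_le_one).2 hf

lemma ctr_fc_im {A : Matrix n n ℂ} (hA : A.PosSemidef) (z : ℂ) (hz : z.re = 0) :
    ‖fc hA.1 (pw z)‖ ≤ 1 := by
  refine ctr_fc _ _ fun i => (pw_norm_le (hA.eigenvalues_nonneg i) z).trans ?_
  rw [hz, Real.rpow_zero]

lemma ctr_col {K : Matrix n n ℂ} (hK : ‖K‖ ≤ 1) (j : n) : ∑ i, ‖K i j‖ ^ 2 ≤ 1 := by
  have h := Matrix.l2_opNorm_mulVec K (EuclideanSpace.single j (1 : ℂ))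
  rw [PiLp.norm_single, norm_one, mul_one] at h
  have h2 := (h.trans hK)
  have h3 := pow_le_one₀ (n := 2) (norm_nonneg _) h2
  rw [EuclideanSpace.norm_sq_eq] at h3
  simpa using h3

lemma ctr_row {K : Matrix n n ℂ} (hK : ‖K‖ ≤ 1) (i : n) : ∑ j, ‖K i j‖ ^ 2 ≤ 1 := by
  have := ctr_col (ctr_star hK) i
  simpa [Matrix.star_apply] using this

/-- Hölder inequality for traces in diagonal form. -/
lemma holder_trace {K L : Matrix n n ℂ} (hK : ‖K‖ ≤ 1) (hL : ‖L‖ ≤ 1) (p q : n → ℂ) (x y : n → ℝ)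
    (hx : ∀ i, 0 ≤ x i) (hy : ∀ i, 0 ≤ y i) (u v : ℝ) (hu : 0 ≤ u) (hv : 0 ≤ v) (huv : u + v = 1)
    (hp : ∀ i, ‖p i‖ ≤ x i ^ u) (hq : ∀ i, ‖q i‖ ≤ y i ^ v) :
    ‖(Matrix.diagonal p * K * Matrix.diagonal q * L).trace‖ ≤ (∑ i, x i) ^ u * (∑ j, y j) ^ v := by
  have e : (Matrix.diagonal p * K * Matrix.diagonal q * L).trace
      = ∑ i, ∑ j, p i * K i j * q j * L j i := by
    simp [Matrix.trace, Matrix.mul_apply, Matrix.diagonal_apply]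
  rw [e]
  refine le_trans ?_ (aux_holder2 (fun i j => (‖K i j‖ ^ 2 + ‖L j i‖ ^ 2) / 2) x y
    (fun i j => by positivity) ?_ ?_ hx hy u v hu hv huv)
  · refine (norm_sum_le _ _).trans (Finset.sum_le_sum fun i _ => ?_)
    refine (norm_sum_le _ _).trans (Finset.sum_le_sum fun j _ => ?_)
    rw [norm_mul, norm_mul, norm_mul]
    calc ‖p i‖ * ‖K i j‖ * ‖q j‖ * ‖L j i‖ = (‖K i j‖ * ‖L j i‖) * (‖p i‖ * ‖q j‖) := by ring
      _ ≤ _ := by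
        refine mul_le_mul ?_ (mul_le_mul (hp i) (hq j) (norm_nonneg _) (Real.rpow_nonneg (hx i) _))
          (by positivity) (by positivity)
        nlinarith [sq_nonneg (‖K i j‖ - ‖L j i‖)]
  · intro i
    rw [← Finset.sum_div, Finset.sum_add_distrib]
    linarith [ctr_row hK i, ctr_col hL i]
  · intro i
    rw [← Finset.sum_div, Finset.sum_add_distrib]
    linarith [ctr_row hL i, ctr_col hK i]

/-- Hölder inequality for traces. -/
lemma holder_fc {A B K L : Matrix n n ℂ} (hA : A.IsHermitian) (hB : B.IsHermitian)
    (hK : ‖K‖ ≤ 1) (hL : ‖L‖ ≤ 1) (f g : ℝ → ℂ) (x y : n → ℝ)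
    (hx : ∀ i, 0 ≤ x i) (hy : ∀ i, 0 ≤ y i) (u v : ℝ) (hu : 0 ≤ u) (hv : 0 ≤ v) (huv : u + v = 1)
    (hp : ∀ i, ‖f (hA.eigenvalues i)‖ ≤ x i ^ u) (hq : ∀ i, ‖g (hB.eigenvalues i)‖ ≤ y i ^ v) :
    ‖(fc hA f * K * fc hB g * L).trace‖ ≤ (∑ i, x i) ^ u * (∑ j, y j) ^ v := by
  have h := holder_trace (K := star (hA.eigenvectorUnitary : Matrix n n ℂ) * K * (hB.eigenvectorUnitary : Matrix n n ℂ))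
    (L := star (hB.eigenvectorUnitary : Matrix n n ℂ) * L * (hA.eigenvectorUnitary : Matrix n n ℂ))
    (ctr_mul (ctr_mul (ctr_star (ctr_unitary hA)) hK) (ctr_unitary hB))
    (ctr_mul (ctr_mul (ctr_star (ctr_unitary hB)) hL) (ctr_unitary hA))
    (fun i => f (hA.eigenvalues i)) (fun i => g (hB.eigenvalues i)) x y hx hy u v hu hv huv hp hq
  convert h using 2
  unfold fc
  rw [← mul_assoc _ _ (hA.eigenvectorUnitary : Matrix n n ℂ), Matrix.trace_mul_comm _
    (hA.eigenvectorUnitary : Matrix n n ℂ)]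
  congr 1
  noncomm_ring

lemma polar_left (G P : Matrix n n ℂ) (hGP : G * Gᴴ = P) (hP : P.PosSemidef) :
    ∃ K : Matrix n n ℂ, ‖K‖ ≤ 1 ∧ G = fc hP.1 (pw (1 / 2)) * K := by
  have hP1 := fc_pw_one hP.1
  have hstar : ∀ t : ℝ, (fc hP.1 (pw t))ᴴ = fc hP.1 (pw t) := fc_pw_real_conjTranspose hP
  have h0 : (fc hP.1 (pw 0))ᴴ = fc hP.1 (pw 0) := by simpa using hstar 0
  have hm : (fc hP.1 (pw (-(1 / 2))))ᴴ = fc hP.1 (pw (-(1 / 2))) := by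
    simpa using hstar (-(1 / 2))
  refine ⟨fc hP.1 (pw (-(1 / 2))) * G, ?_, ?_⟩
  · have h1 : (fc hP.1 (pw (-(1 / 2))) * G) * (fc hP.1 (pw (-(1 / 2))) * G)ᴴ = fc hP.1 (pw 0) := by
      rw [Matrix.conjTranspose_mul, hm]
      calc _ = fc hP.1 (pw (-(1 / 2))) * (G * Gᴴ) * fc hP.1 (pw (-(1 / 2))) := by noncomm_ring
        _ = fc hP.1 (pw (-(1 / 2))) * fc hP.1 (pw 1) * fc hP.1 (pw (-(1 / 2))) := by rw [hP1, hGP]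
        _ = _ := by rw [fc_pw_mul, fc_pw_mul]; norm_num
    have h2 := Matrix.l2_opNorm_conjTranspose_mul_self (fc hP.1 (pw (-(1 / 2))) * G)ᴴ
    rw [Matrix.conjTranspose_conjTranspose, h1, Matrix.l2_opNorm_conjTranspose] at h2
    have h3 := ctr_fc_im hP 0 rfl
    nlinarith [norm_nonneg (fc hP.1 (pw (-(1 / 2))) * G)]
  · rw [← mul_assoc, fc_pw_mul]
    have e : (1 / 2 + -(1 / 2) : ℂ) = 0 := by norm_num
    rw [e]
    have h1 : ((1 - fc hP.1 (pw 0)) * G) * ((1 - fc hP.1 (pw 0)) * G)ᴴ = 0 := by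
      rw [Matrix.conjTranspose_mul, Matrix.conjTranspose_sub, h0, Matrix.conjTranspose_one]
      calc _ = (1 - fc hP.1 (pw 0)) * (G * Gᴴ) * (1 - fc hP.1 (pw 0)) := by noncomm_ring
        _ = (1 - fc hP.1 (pw 0)) * fc hP.1 (pw 1) * (1 - fc hP.1 (pw 0)) := by rw [hP1, hGP]
        _ = 0 := by rw [sub_mul, fc_pw_mul]; simp
    have h2 := Matrix.self_mul_conjTranspose_eq_zero.1 h1
    rw [sub_mul, one_mul, sub_eq_zero] at h2
    exact h2

/-- Entire functions which are bounded on the unit strip. -/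
def GoodF (f : ℂ → ℂ) : Prop :=
  Differentiable ℂ f ∧ ∃ C : ℝ, ∀ z : ℂ, z.re ∈ Set.Icc (0 : ℝ) 1 → ‖f z‖ ≤ C

lemma GoodF.const (c : ℂ) : GoodF (fun _ => c) :=
  ⟨differentiable_const c, ‖c‖, fun _ _ => le_rfl⟩

lemma GoodF.mul {f g : ℂ → ℂ} (hf : GoodF f) (hg : GoodF g) : GoodF (fun z => f z * g z) := by
  obtain ⟨hf, C, hC⟩ := hf
  obtain ⟨hg, D, hD⟩ := hg
  refine ⟨hf.mul hg, C * D, fun z hz => ?_⟩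
  rw [norm_mul]
  exact mul_le_mul (hC z hz) (hD z hz) (norm_nonneg _) ((norm_nonneg _).trans (hC z hz))

lemma GoodF.sum {ι : Type*} (s : Finset ι) {f : ι → ℂ → ℂ} (hf : ∀ i, GoodF (f i)) :
    GoodF (fun z => ∑ i ∈ s, f i z) := by
  choose h1 C hC using hf
  refine ⟨Differentiable.fun_sum fun i _ => h1 i, ∑ i ∈ s, C i, fun z hz => ?_⟩
  exact (norm_sum_le _ _).trans (Finset.sum_le_sum fun i _ => hC i z hz)

lemma GoodF.pw {x : ℝ} (hx : 0 ≤ x) (c d : ℝ) : GoodF (fun z => pw ((c : ℂ) * z + d) x) := by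
  rcases hx.eq_or_lt with rfl | hx'
  · simpa [_root_.pw] using GoodF.const 0
  refine ⟨?_, x ^ d * Real.exp |Real.log x * c|, fun z hz => ?_⟩
  · have e : (fun z => _root_.pw ((c : ℂ) * z + d) x) = fun z => (x : ℂ) ^ ((c : ℂ) * z + d) := by
      ext z
      simp [_root_.pw, hx'.ne']
    rw [e]
    intro z
    have hxc : (x : ℂ) ≠ 0 := by exact_mod_cast hx'.ne'
    exact DifferentiableAt.const_cpow (by fun_prop) (Or.inl hxc)
  · refine (pw_norm_le hx _).trans ?_
    have e : ((c : ℂ) * z + d).re = d + c * z.re := by simp [add_comm]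
    rw [e, Real.rpow_add hx']
    refine mul_le_mul_of_nonneg_left ?_ (Real.rpow_nonneg hx _)
    rw [Real.rpow_def_of_pos hx', Real.exp_le_exp, ← mul_assoc]
    refine (le_abs_self _).trans ?_
    rw [abs_mul, abs_of_nonneg hz.1]
    exact mul_le_of_le_one_right (abs_nonneg _) hz.2

/-- Matrix families with good entries. -/
def GoodM (M : ℂ → Matrix n n ℂ) : Prop := ∀ i j, GoodF (fun z => M z i j)

lemma GoodM.const (M : Matrix n n ℂ) : GoodM (fun _ => M) := fun _ _ => GoodF.const _

lemma GoodM.mul {M N : ℂ → Matrix n n ℂ} (hM : GoodM M) (hN : GoodM N) :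
    GoodM (fun z => M z * N z) := fun i j => by
  simp only [Matrix.mul_apply]
  exact GoodF.sum _ fun k => (hM i k).mul (hN k j)

lemma GoodM.trace {M : ℂ → Matrix n n ℂ} (hM : GoodM M) : GoodF (fun z => (M z).trace) := by
  simp only [Matrix.trace, Matrix.diag]
  exact GoodF.sum _ fun k => hM k k

lemma GoodM.fc {A : Matrix n n ℂ} (hA : A.PosSemidef) (c d : ℝ) :
    GoodM (fun z => fc hA.1 (pw ((c : ℂ) * z + d))) := by
  unfold _root_.fc
  refine GoodM.mul (GoodM.mul (GoodM.const _) fun i j => ?_) (GoodM.const _)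
  simp only [Matrix.diagonal_apply]
  split_ifs with h
  · exact GoodF.pw (hA.eigenvalues_nonneg i) c d
  · exact GoodF.const 0

set_option maxHeartbeats 1000000 in
/-- Araki–Lieb–Thirring inequality, by complex interpolation. -/
lemma alt_ineq {ρ τ : Matrix n n ℂ} (hρ : ρ.PosSemidef) (hτ : τ.PosSemidef) (c d p t : ℝ)
    (hp : 1 ≤ p) (ht : 0 < t) (ht1 : t < 1) (X G : Matrix n n ℂ)
    (hX : X = fc hρ.1 (pw ((c * t : ℝ) : ℂ)) * fc hτ.1 (pw ((d * t : ℝ) : ℂ)))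
    (hG : G = fc hρ.1 (pw (c : ℂ)) * fc hτ.1 (pw (d : ℂ)))
    (Q P : Matrix n n ℂ) (hXQ : X * Xᴴ = Q) (hGP : G * Gᴴ = P)
    (hQ : Q.PosSemidef) (hP : P.PosSemidef) :
    ∑ i, (hQ.1.eigenvalues i) ^ (p / (2 * t)) ≤ ∑ i, (hP.1.eigenvalues i) ^ (p / 2) := by
  have hp0 : 0 < p := by linarith
  set m := p / (2 * t) with hm
  have hm0 : 0 < m := by positivity
  have hmp : m / p = 1 / (2 * t) := by rw [hm]; field_simp
  set T := ∑ i, (hQ.1.eigenvalues i) ^ m with hT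
  set S := ∑ i, (hP.1.eigenvalues i) ^ (p / 2) with hS
  have hT0 : 0 ≤ T := Finset.sum_nonneg fun i _ => Real.rpow_nonneg (hQ.eigenvalues_nonneg i) _
  have hS0 : 0 ≤ S := Finset.sum_nonneg fun i _ => Real.rpow_nonneg (hP.eigenvalues_nonneg i) _
  rcases hT0.eq_or_lt with h | hTpos
  · rw [← h]; exact hS0
  obtain ⟨K, hK, hXK⟩ := polar_left X Q hXQ hQ
  obtain ⟨L, hL, hGL⟩ := polar_left G P hGP hP
  have hQhalf : (fc hQ.1 (pw (1 / 2)))ᴴ = fc hQ.1 (pw (1 / 2)) := by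
    simpa using fc_pw_real_conjTranspose hQ (1 / 2)
  have hXs : Xᴴ = Kᴴ * fc hQ.1 (pw (1 / 2)) := by
    conv_lhs => rw [hXK]
    rw [Matrix.conjTranspose_mul, hQhalf]
  have hKs : ‖Kᴴ‖ ≤ 1 := ctr_star hK
  let F : ℂ → ℂ := fun z => (fc hρ.1 (pw ((c : ℂ) * z + (0 : ℝ))) * fc hτ.1 (pw ((d : ℂ) * z + (0 : ℝ))) *
    Xᴴ * fc hQ.1 (pw (((-(m / p) : ℝ) : ℂ) * z + ((m - 1 / 2 : ℝ) : ℂ)))).trace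
  have hgood : GoodF F :=
    GoodM.trace (((((GoodM.fc hρ c 0).mul (GoodM.fc hτ d 0)).mul (GoodM.const _)).mul
      (GoodM.fc hQ _ _)))
  have hF1 : ∀ z, F z = (fc hρ.1 (pw ((c : ℂ) * z)) * fc hτ.1 (pw ((d : ℂ) * z)) *
      Kᴴ * fc hQ.1 (pw (m - (m / p) * z))).trace := by
    intro z
    have e1 : (1 / 2 : ℂ) + (((-(m / p) : ℝ) : ℂ) * z + ((m - 1 / 2 : ℝ) : ℂ)) = m - (m / p) * z := by
      push_cast; ring
    simp only [F]
    rw [hXs, ← e1, ← fc_pw_mul hQ.1 (1 / 2) (((-(m / p) : ℝ) : ℂ) * z + ((m - 1 / 2 : ℝ) : ℂ))]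
    simp only [Complex.ofReal_zero, add_zero, mul_assoc]
  have hre : ∀ z : ℂ, ((m : ℂ) - (m / p) * z).re = m - (m / p) * z.re := by
    intro z
    have : ((m : ℂ) - (m / p) * z) = ((m : ℝ) : ℂ) - ((m / p : ℝ) : ℂ) * z := by push_cast; ring
    rw [this, Complex.sub_re, Complex.re_ofReal_mul, Complex.ofReal_re]
  have hb0 : ∀ z : ℂ, z.re = 0 → ‖F z‖ ≤ T := by
    intro z hz
    rw [hF1]
    have h := holder_fc hQ.1 hQ.1 (K := fc hρ.1 (pw ((c : ℂ) * z)) * fc hτ.1 (pw ((d : ℂ) * z)) * Kᴴ)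
      (L := fc hQ.1 (fun _ => 1))
      (ctr_mul (ctr_mul (ctr_fc_im hρ _ (by simp [hz])) (ctr_fc_im hτ _ (by simp [hz]))) hKs)
      (ctr_fc _ _ fun i => by simp)
      (fun _ => 1) (pw (m - (m / p) * z)) (fun _ => 0) (fun i => (hQ.1.eigenvalues i) ^ m)
      (fun _ => le_rfl) (fun i => Real.rpow_nonneg (hQ.eigenvalues_nonneg i) _) 0 1 le_rfl zero_le_one
      (by norm_num) (fun i => by simp) (fun i => by
        refine (pw_norm_le (hQ.eigenvalues_nonneg i) _).trans ?_
        rw [hre, hz]; simp)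
    rw [fc_one, one_mul, mul_one] at h
    simpa using h
  have hb1 : ∀ z : ℂ, z.re = 1 → ‖F z‖ ≤ S ^ (1 / p) * T ^ (1 - 1 / p) := by
    intro z hz
    rw [hF1]
    have e1 : (c : ℂ) * z = c * (z - 1) + c := by ring
    have e2 : (d : ℂ) * z = d + d * (z - 1) := by ring
    have h := holder_fc hP.1 hQ.1 (K := L * fc hτ.1 (pw ((d : ℂ) * (z - 1))) * Kᴴ)
      (L := fc hρ.1 (pw ((c : ℂ) * (z - 1))))
      (ctr_mul (ctr_mul hL (ctr_fc_im hτ _ (by simp [hz]))) hKs)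
      (ctr_fc_im hρ _ (by simp [hz]))
      (pw (1 / 2)) (pw (m - (m / p) * z)) (fun i => (hP.1.eigenvalues i) ^ (p / 2))
      (fun i => (hQ.1.eigenvalues i) ^ m)
      (fun i => Real.rpow_nonneg (hP.eigenvalues_nonneg i) _)
      (fun i => Real.rpow_nonneg (hQ.eigenvalues_nonneg i) _) (1 / p) (1 - 1 / p) (by positivity)
      (by rw [sub_nonneg, div_le_one hp0]; exact hp)
      (by ring) (fun i => by
        refine (pw_norm_le (hP.eigenvalues_nonneg i) _).trans ?_
        rw [← Real.rpow_mul (hP.eigenvalues_nonneg i)]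
        refine le_of_eq ?_
        congr 1
        have : (1 / 2 : ℂ).re = 1 / 2 := by norm_num
        rw [this]; field_simp) (fun i => by
        refine (pw_norm_le (hQ.eigenvalues_nonneg i) _).trans ?_
        rw [hre, hz, ← Real.rpow_mul (hQ.eigenvalues_nonneg i)]
        refine le_of_eq ?_
        congr 1
        ring)
    refine le_trans (le_of_eq (congrArg norm ?_)) h
    rw [e1, e2, ← fc_pw_mul hρ.1, ← fc_pw_mul hτ.1,
      Matrix.trace_mul_comm _ (fc hρ.1 (pw ((c : ℂ) * (z - 1))))]
    refine congrArg Matrix.trace ?_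
    have : fc hP.1 (pw (1 / 2)) * L = fc hρ.1 (pw (c : ℂ)) * fc hτ.1 (pw (d : ℂ)) := by
      rw [← hGL, hG]
    calc _ = fc hρ.1 (pw ((c : ℂ) * (z - 1))) * (fc hρ.1 (pw (c : ℂ)) * fc hτ.1 (pw (d : ℂ))) *
          fc hτ.1 (pw ((d : ℂ) * (z - 1))) * Kᴴ * fc hQ.1 (pw (m - m / p * z)) := by
          simp only [mul_assoc]
      _ = _ := by rw [← this]; simp only [mul_assoc]
  have hFt : F t = (T : ℂ) := by
    simp only [F]
    have e1 : fc hρ.1 (pw ((c : ℂ) * t + (0 : ℝ))) * fc hτ.1 (pw ((d : ℂ) * t + (0 : ℝ))) = X := by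
      rw [hX]; simp
    have e3 : Q * fc hQ.1 (pw (((-(m / p) : ℝ) : ℂ) * t + ((m - 1 / 2 : ℝ) : ℂ))) =
        fc hQ.1 (pw 1) * fc hQ.1 (pw (((-(m / p) : ℝ) : ℂ) * t + ((m - 1 / 2 : ℝ) : ℂ))) := by
      rw [fc_pw_one]
    rw [e1, hXQ, e3, fc_pw_mul, fc_trace, hT, Complex.ofReal_sum]
    refine Finset.sum_congr rfl fun i _ => ?_
    have e2 : (1 : ℂ) + (((-(m / p) : ℝ) : ℂ) * t + ((m - 1 / 2 : ℝ) : ℂ)) = (m : ℝ) := by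
      rw [hmp]
      push_cast
      have : (t : ℂ) ≠ 0 := by exact_mod_cast ht.ne'
      field_simp
      ring
    rw [e2, pw_ofReal (hQ.eigenvalues_nonneg i)]
    split_ifs with h
    · rw [h, Real.zero_rpow hm0.ne']
    · rfl
  have h3 := Complex.HadamardThreeLines.norm_le_interp_of_mem_verticalClosedStrip'
    (f := F) (z := (t : ℂ)) (a := T) (b := S ^ (1 / p) * T ^ (1 - 1 / p)) (l := 0) (u := 1)
    zero_lt_one (by simp [Complex.HadamardThreeLines.verticalClosedStrip, ht.le, ht1.le])
    hgood.1.diffContOnCl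
    (by
      obtain ⟨C, hC⟩ := hgood.2
      refine ⟨C, ?_⟩
      rintro _ ⟨z, hz, rfl⟩
      exact hC z hz)
    (fun z hz => hb0 z hz) (fun z hz => hb1 z hz)
  rw [hFt, Complex.norm_real, Real.norm_of_nonneg hT0, Complex.ofReal_re] at h3
  simp only [sub_zero, div_one] at h3
  rw [Real.mul_rpow (Real.rpow_nonneg hS0 _) (Real.rpow_nonneg hT0 _), ← Real.rpow_mul hS0,
    ← Real.rpow_mul hT0] at h3
  have h4 : T ^ (t / p) * T ^ (1 - t / p) ≤ S ^ (t / p) * T ^ (1 - t / p) := by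
    rw [← Real.rpow_add hTpos]
    calc T ^ (t / p + (1 - t / p)) = T := by rw [add_sub_cancel, Real.rpow_one]
      _ ≤ _ := h3
      _ = S ^ (1 / p * t) * (T ^ (1 - t) * T ^ ((1 - 1 / p) * t)) := by ring
      _ = _ := by
        rw [← Real.rpow_add hTpos]
        congr 2 <;> ring
  have h5 := le_of_mul_le_mul_right h4 (Real.rpow_pos_of_pos hTpos _)
  exact (Real.rpow_le_rpow_iff hT0 hS0 (by positivity)).1 h5

/-- Real powers on the support. -/
noncomputable def rp (x t : ℝ) : ℝ := if x = 0 then 0 else x ^ t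

lemma rp_nonneg {x : ℝ} (hx : 0 ≤ x) (t : ℝ) : 0 ≤ rp x t := by
  unfold rp
  split_ifs
  · exact le_rfl
  · exact Real.rpow_nonneg hx _

lemma rp_le {x : ℝ} (hx : 0 ≤ x) (t : ℝ) : rp x t ≤ x ^ t := by
  unfold rp
  split_ifs
  · exact Real.rpow_nonneg hx _
  · exact le_rfl

lemma rp_eq {x : ℝ} {t : ℝ} (ht : t ≠ 0) : rp x t = x ^ t := by
  unfold rp
  split_ifs with h
  · rw [h, Real.zero_rpow ht]
  · rfl

/-- Overlap of the eigenbases. -/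
noncomputable def ovl {A B : Matrix n n ℂ} (hA : A.IsHermitian) (hB : B.IsHermitian) (i j : n) : ℝ :=
  ‖(star (hA.eigenvectorUnitary : Matrix n n ℂ) * (hB.eigenvectorUnitary : Matrix n n ℂ)) i j‖ ^ 2

lemma ovl_nonneg {A B : Matrix n n ℂ} (hA : A.IsHermitian) (hB : B.IsHermitian) (i j : n) :
    0 ≤ ovl hA hB i j := by unfold ovl; positivity

lemma trace_fc_fc {A B : Matrix n n ℂ} (hA : A.IsHermitian) (hB : B.IsHermitian) (f g : ℝ → ℂ) :
    (fc hA f * fc hB g).trace =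
      ∑ i, ∑ j, (ovl hA hB i j : ℂ) * (f (hA.eigenvalues i) * g (hB.eigenvalues j)) := by
  set W := star (hA.eigenvectorUnitary : Matrix n n ℂ) * (hB.eigenvectorUnitary : Matrix n n ℂ) with hW
  have e : (fc hA f * fc hB g).trace = (Matrix.diagonal (fun i => f (hA.eigenvalues i)) * W *
      Matrix.diagonal (fun i => g (hB.eigenvalues i)) * star W).trace := by
    unfold fc
    rw [hW, star_mul, star_star, ← mul_assoc _ _ (hA.eigenvectorUnitary : Matrix n n ℂ),
      Matrix.trace_mul_comm _ (hA.eigenvectorUnitary : Matrix n n ℂ)]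
    refine congrArg Matrix.trace ?_
    simp only [mul_assoc]
  rw [e]
  simp only [Matrix.trace, Matrix.diag, Matrix.mul_apply, Matrix.diagonal_apply, ite_mul, zero_mul,
    mul_ite, mul_zero, Finset.sum_ite_eq, Finset.sum_ite_eq', Finset.mem_univ, if_true,
    Matrix.star_apply]
  refine Finset.sum_congr rfl fun i _ => Finset.sum_congr rfl fun j _ => ?_
  have : (ovl hA hB i j : ℂ) = W i j * star (W i j) := by
    unfold ovl
    rw [← hW]
    have := Complex.mul_conj' (W i j)
    rw [Complex.star_def, this]
    push_cast
    rfl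
  rw [this]
  ring

lemma ovl_row {A B : Matrix n n ℂ} (hA : A.IsHermitian) (hB : B.IsHermitian) (i : n) :
    ∑ j, ovl hA hB i j = 1 := by
  set W := star (hA.eigenvectorUnitary : Matrix n n ℂ) * (hB.eigenvectorUnitary : Matrix n n ℂ) with hW
  have h1 : W * star W = 1 := by
    rw [hW, star_mul, star_star, ← mul_assoc, mul_assoc (star _), ev_mul_star, mul_one, ev_star_mul]
  have h2 := congrFun (congrFun h1 i) i
  rw [Matrix.mul_apply, Matrix.one_apply_eq] at h2
  have h3 : ∀ j, (ovl hA hB i j : ℂ) = W i j * star W j i := fun j => by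
    unfold ovl
    rw [← hW, Matrix.star_apply, Complex.star_def, Complex.mul_conj' (W i j)]
    push_cast
    rfl
  have h4 : ((∑ j, ovl hA hB i j : ℝ) : ℂ) = 1 := by
    rw [Complex.ofReal_sum, ← h2]
    exact Finset.sum_congr rfl fun j _ => h3 j
  exact_mod_cast h4

lemma ovl_symm {A B : Matrix n n ℂ} (hA : A.IsHermitian) (hB : B.IsHermitian) (i j : n) :
    ovl hA hB i j = ovl hB hA j i := by
  unfold ovl
  have : star (hB.eigenvectorUnitary : Matrix n n ℂ) * (hA.eigenvectorUnitary : Matrix n n ℂ) =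
    star (star (hA.eigenvectorUnitary : Matrix n n ℂ) * (hB.eigenvectorUnitary : Matrix n n ℂ)) := by
    rw [star_mul, star_star]
  rw [this, Matrix.star_apply, norm_star]

lemma ovl_col {A B : Matrix n n ℂ} (hA : A.IsHermitian) (hB : B.IsHermitian) (j : n) :
    ∑ i, ovl hA hB i j = 1 := by
  simp only [ovl_symm hA hB]
  exact ovl_row hB hA j

lemma ovl_supp {A B : Matrix n n ℂ} (hA : A.IsHermitian) (hB : B.IsHermitian)
    (h : A * fc hB (pw 0) = A) (i j : n) (hj : hB.eigenvalues j = 0) :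
    ovl hA hB i j * hA.eigenvalues i = 0 := by
  have h1 : star (hA.eigenvectorUnitary : Matrix n n ℂ) * A =
      Matrix.diagonal (fun i => (hA.eigenvalues i : ℂ)) * star (hA.eigenvectorUnitary : Matrix n n ℂ) := by
    have h0 : star (hA.eigenvectorUnitary : Matrix n n ℂ) * A =
        star (hA.eigenvectorUnitary : Matrix n n ℂ) * fc hA (fun x => (x : ℂ)) := by rw [fc_id]
    rw [h0]
    unfold fc
    rw [← mul_assoc, ← mul_assoc, ev_star_mul, one_mul]
  have h2 : fc hB (pw 0) * (hB.eigenvectorUnitary : Matrix n n ℂ) =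
      (hB.eigenvectorUnitary : Matrix n n ℂ) * Matrix.diagonal (fun i => pw 0 (hB.eigenvalues i)) := by
    unfold fc
    rw [mul_assoc, ev_star_mul, mul_one]
  set U := (hA.eigenvectorUnitary : Matrix n n ℂ)
  set V := (hB.eigenvectorUnitary : Matrix n n ℂ)
  have h3 : Matrix.diagonal (fun i => (hA.eigenvalues i : ℂ)) * (star U * V) =
      Matrix.diagonal (fun i => (hA.eigenvalues i : ℂ)) * (star U * V) *
        Matrix.diagonal (fun i => pw 0 (hB.eigenvalues i)) := by
    calc _ = star U * A * V := by rw [h1, mul_assoc]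
      _ = star U * (A * fc hB (pw 0)) * V := by rw [h]
      _ = star U * A * (fc hB (pw 0) * V) := by simp only [mul_assoc]
      _ = _ := by rw [h1, h2]; simp only [mul_assoc]
  have h4 := congrFun (congrFun h3 i) j
  rw [Matrix.mul_diagonal, Matrix.diagonal_mul, hj] at h4
  have h5 : pw 0 0 = 0 := by simp [pw]
  rw [h5, mul_zero] at h4
  have hov : ovl hA hB i j = ‖(star U * V) i j‖ ^ 2 := rfl
  rcases mul_eq_zero.1 h4 with h | h
  · rw [Complex.ofReal_eq_zero.1 h, mul_zero]
  · rw [hov, h]; simp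

/-- The trace `tr (A^x B^y)` in spectral form. -/
noncomputable def trP {A B : Matrix n n ℂ} (hA : A.PosSemidef) (hB : B.PosSemidef) (x y : ℝ) : ℝ :=
  ∑ i, ∑ j, ovl hA.1 hB.1 i j * (rp (hA.1.eigenvalues i) x * rp (hB.1.eigenvalues j) y)

lemma trP_nonneg {A B : Matrix n n ℂ} (hA : A.PosSemidef) (hB : B.PosSemidef) (x y : ℝ) :
    0 ≤ trP hA hB x y :=
  Finset.sum_nonneg fun i _ => Finset.sum_nonneg fun j _ => mul_nonneg (ovl_nonneg _ _ _ _)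
    (mul_nonneg (rp_nonneg (hA.eigenvalues_nonneg i) _) (rp_nonneg (hB.eigenvalues_nonneg j) _))

lemma trace_eq_trP {A B : Matrix n n ℂ} (hA : A.PosSemidef) (hB : B.PosSemidef) (x y : ℝ) :
    (fc hA.1 (pw x) * fc hB.1 (pw y)).trace = (trP hA hB x y : ℂ) := by
  rw [trace_fc_fc]
  unfold trP rp
  rw [Complex.ofReal_sum]
  refine Finset.sum_congr rfl fun i _ => ?_
  rw [Complex.ofReal_sum]
  refine Finset.sum_congr rfl fun j _ => ?_
  rw [pw_ofReal (hA.eigenvalues_nonneg i), pw_ofReal (hB.eigenvalues_nonneg j), ← Complex.ofReal_mul,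
    ← Complex.ofReal_mul]

lemma trP_zero {A B : Matrix n n ℂ} (hA : A.PosSemidef) (hB : B.PosSemidef) (x y x' y' : ℝ)
    (h : trP hA hB x y = 0) : trP hA hB x' y' = 0 := by
  unfold trP at h ⊢
  have hn : ∀ i j, 0 ≤ ovl hA.1 hB.1 i j * (rp (hA.1.eigenvalues i) x * rp (hB.1.eigenvalues j) y) :=
    fun i j => mul_nonneg (ovl_nonneg _ _ _ _)
    (mul_nonneg (rp_nonneg (hA.eigenvalues_nonneg i) _) (rp_nonneg (hB.eigenvalues_nonneg j) _))
  rw [Finset.sum_eq_zero_iff_of_nonneg (fun i _ => Finset.sum_nonneg fun j _ => hn i j)] at h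
  refine Finset.sum_eq_zero fun i hi => Finset.sum_eq_zero fun j hj => ?_
  have h1 := h i hi
  rw [Finset.sum_eq_zero_iff_of_nonneg (fun j _ => hn i j)] at h1
  have h2 := h1 j hj
  have key : ∀ r t : ℝ, 0 ≤ r → rp r t = 0 → r = 0 := by
    intro r t hr h
    unfold rp at h
    split_ifs at h with h'
    · exact h'
    · exact absurd h (Real.rpow_pos_of_pos (lt_of_le_of_ne hr (Ne.symm h')) t).ne'
  rcases mul_eq_zero.1 h2 with h3 | h3
  · rw [h3, zero_mul]
  · rcases mul_eq_zero.1 h3 with h4 | h4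
    · rw [key _ _ (hA.eigenvalues_nonneg i) h4]; simp [rp]
    · rw [key _ _ (hB.eigenvalues_nonneg j) h4]; simp [rp]

lemma sum_eig {A : Matrix n n ℂ} (hA : A.PosSemidef) (r : ℝ) (h : A.trace = r) :
    ∑ i, hA.1.eigenvalues i = r := by
  have := hA.1.trace_eq_sum_eigenvalues
  rw [h] at this
  have h2 : ((∑ i, hA.1.eigenvalues i : ℝ) : ℂ) = (r : ℂ) := by
    rw [this]; push_cast; rfl
  exact_mod_cast h2

lemma trace_matRpow {A : Matrix n n ℂ} (hA : A.PosSemidef) {t : ℝ} (ht : t ≠ 0) :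
    (matRpow A t).trace.re = ∑ i, (hA.1.eigenvalues i) ^ t := by
  rw [matRpow_eq hA, fc_trace, Complex.re_sum]
  refine Finset.sum_congr rfl fun i _ => ?_
  rw [pw_ofReal (hA.eigenvalues_nonneg i), Complex.ofReal_re]
  exact rp_eq ht

lemma sum_eig_comm (X : Matrix n n ℂ) (h1 : (X * Xᴴ).IsHermitian) (h2 : (Xᴴ * X).IsHermitian)
    (t : ℝ) : ∑ i, (h1.eigenvalues i) ^ t = ∑ i, (h2.eigenvalues i) ^ t := by
  have key : ∀ {A : Matrix n n ℂ} (hA : A.IsHermitian), ∑ i, (hA.eigenvalues i) ^ t =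
      (A.charpoly.roots.map (fun z : ℂ => z.re ^ t)).sum := by
    intro A hA
    rw [hA.roots_charpoly_eq_eigenvalues, Multiset.map_map]
    rfl
  rw [key, key, Matrix.charpoly_mul_comm]

lemma fc_pw_mulR {A : Matrix n n ℂ} (hA : A.IsHermitian) (x y z : ℝ) (h : x + y = z) :
    fc hA (pw (x : ℂ)) * fc hA (pw (y : ℂ)) = fc hA (pw (z : ℂ)) := by
  rw [fc_pw_mul, ← h, Complex.ofReal_add]

/-- `X X*` for `X = ρ^x τ^y`. -/
lemma prod_self {ρ τ : Matrix n n ℂ} (hρ : ρ.PosSemidef) (hτ : τ.PosSemidef) (x y : ℝ) :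
    (fc hρ.1 (pw (x : ℂ)) * fc hτ.1 (pw (y : ℂ))) * (fc hρ.1 (pw (x : ℂ)) * fc hτ.1 (pw (y : ℂ)))ᴴ =
      fc hρ.1 (pw (x : ℂ)) * fc hτ.1 (pw ((2 * y : ℝ) : ℂ)) * fc hρ.1 (pw (x : ℂ)) := by
  rw [Matrix.conjTranspose_mul, fc_pw_real_conjTranspose hρ, fc_pw_real_conjTranspose hτ,
    ← fc_pw_mulR hτ.1 y y (2 * y) (by ring)]
  simp only [mul_assoc]

lemma prod_self_trace {ρ τ : Matrix n n ℂ} (hρ : ρ.PosSemidef) (hτ : τ.PosSemidef) (x y : ℝ) :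
    ((fc hρ.1 (pw (x : ℂ)) * fc hτ.1 (pw (y : ℂ))) *
      (fc hρ.1 (pw (x : ℂ)) * fc hτ.1 (pw (y : ℂ)))ᴴ).trace = (trP hρ hτ (2 * x) (2 * y) : ℂ) := by
  rw [prod_self hρ hτ, Matrix.trace_mul_comm, ← mul_assoc, fc_pw_mulR hρ.1 x x (2 * x) (by ring),
    trace_eq_trP]

/-- The sandwiched trace. -/
noncomputable def trS (α : ℝ) (ρ τ : Matrix n n ℂ) : ℝ :=
  (matRpow (matRpow τ ((1 - α) / (2 * α)) * ρ * matRpow τ ((1 - α) / (2 * α))) α).trace.re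

lemma trS_eq {ρ τ : Matrix n n ℂ} (hρ : ρ.PosSemidef) (hτ : τ.PosSemidef) {α : ℝ} (hα : 0 < α)
    (X Q : Matrix n n ℂ)
    (hX : X = fc hρ.1 (pw ((1 / 2 : ℝ) : ℂ)) * fc hτ.1 (pw (((1 - α) / (2 * α) : ℝ) : ℂ)))
    (hXQ : X * Xᴴ = Q) (hQ : Q.PosSemidef) :
    trS α ρ τ = ∑ i, (hQ.1.eigenvalues i) ^ α := by
  have e : matRpow τ ((1 - α) / (2 * α)) * ρ * matRpow τ ((1 - α) / (2 * α)) = Xᴴ * X := by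
    rw [hX, Matrix.conjTranspose_mul, fc_pw_real_conjTranspose hρ, fc_pw_real_conjTranspose hτ,
      matRpow_eq hτ]
    have : fc hρ.1 (pw ((1 / 2 : ℝ) : ℂ)) * fc hρ.1 (pw ((1 / 2 : ℝ) : ℂ)) = ρ := by
      rw [fc_pw_mulR hρ.1 (1 / 2) (1 / 2) 1 (by norm_num), Complex.ofReal_one, fc_pw_one]
    conv_lhs => rw [← this]
    simp only [mul_assoc]
  subst hXQ
  unfold trS
  rw [e, trace_matRpow (Matrix.posSemidef_conjTranspose_mul_self X) hα.ne']
  exact (sum_eig_comm X hQ.1 _ α).symm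

lemma trS_ge {ρ τ : Matrix n n ℂ} (hρ : ρ.PosSemidef) (hτ : τ.PosSemidef) {α : ℝ} (hα : 1 / 2 ≤ α)
    (hα1 : α < 1) : trP hρ hτ α (1 - α) ≤ trS α ρ τ := by
  have hα0 : 0 < α := by linarith
  have hXp := Matrix.posSemidef_self_mul_conjTranspose
    (fc hρ.1 (pw ((1 / 2 * α : ℝ) : ℂ)) * fc hτ.1 (pw (((1 - α) / (2 * α) * α : ℝ) : ℂ)))
  have hGp := Matrix.posSemidef_self_mul_conjTranspose
    (fc hρ.1 (pw ((1 / 2 : ℝ) : ℂ)) * fc hτ.1 (pw (((1 - α) / (2 * α) : ℝ) : ℂ)))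
  have h := alt_ineq hρ hτ (1 / 2) ((1 - α) / (2 * α)) (2 * α) α (by linarith) hα0 hα1 _ _ rfl rfl _ _
    rfl rfl hXp hGp
  rw [div_self (by positivity), mul_div_cancel_left₀ _ (two_ne_zero)] at h
  rw [trS_eq hρ hτ hα0 _ _ rfl rfl hGp]
  refine le_trans (le_of_eq ?_) h
  simp only [Real.rpow_one]
  rw [sum_eig hXp _ (prod_self_trace hρ hτ _ _)]
  congr 1
  · ring
  · field_simp

lemma trS_le {ρ τ : Matrix n n ℂ} (hρ : ρ.PosSemidef) (hτ : τ.PosSemidef) {α : ℝ}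
    (hα1 : 1 < α) : trS α ρ τ ≤ trP hρ hτ α (1 - α) := by
  have hα0 : 0 < α := by linarith
  have hXp := Matrix.posSemidef_self_mul_conjTranspose
    (fc hρ.1 (pw ((α / 2 * (1 / α) : ℝ) : ℂ)) * fc hτ.1 (pw (((1 - α) / 2 * (1 / α) : ℝ) : ℂ)))
  have hGp := Matrix.posSemidef_self_mul_conjTranspose
    (fc hρ.1 (pw ((α / 2 : ℝ) : ℂ)) * fc hτ.1 (pw (((1 - α) / 2 : ℝ) : ℂ)))
  have h := alt_ineq hρ hτ (α / 2) ((1 - α) / 2) 2 (1 / α) (by norm_num) (by positivity)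
    (by rw [div_lt_one hα0]; exact hα1) _ _ rfl rfl _ _ rfl rfl hXp hGp
  have e : (2 : ℝ) / (2 * (1 / α)) = α := by field_simp
  rw [e, div_self (two_ne_zero)] at h
  rw [trS_eq hρ hτ hα0 (fc hρ.1 (pw ((α / 2 * (1 / α) : ℝ) : ℂ)) *
    fc hτ.1 (pw (((1 - α) / 2 * (1 / α) : ℝ) : ℂ))) _ (by
      have e1 : α / 2 * (1 / α) = 1 / 2 := by field_simp
      have e2 : (1 - α) / 2 * (1 / α) = (1 - α) / (2 * α) := by field_simp
      rw [e1, e2]) rfl hXp]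
  refine h.trans (le_of_eq ?_)
  simp only [Real.rpow_one]
  rw [sum_eig hGp _ (prod_self_trace hρ hτ _ _)]
  congr 1
  · ring
  · ring

/-- The set-up for the second inequality. -/
lemma trP_Q {ρ τ : Matrix n n ℂ} (hρ : ρ.PosSemidef) (hτ : τ.PosSemidef) {α : ℝ} (hα : 0 < α) :
    ∃ (Q : Matrix n n ℂ) (hQ : Q.PosSemidef), trS α ρ τ = ∑ i, (hQ.1.eigenvalues i) ^ α ∧
      trP hQ hρ 1 (1 - 1 / α) = trP hρ hτ (2 - 1 / α) (1 - (2 - 1 / α)) ∧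
      Q * fc hρ.1 (pw 0) = Q := by
  have hGp := Matrix.posSemidef_self_mul_conjTranspose
    (fc hρ.1 (pw ((1 / 2 : ℝ) : ℂ)) * fc hτ.1 (pw (((1 - α) / (2 * α) : ℝ) : ℂ)))
  refine ⟨_, hGp, trS_eq hρ hτ hα _ _ rfl rfl hGp, ?_, ?_⟩
  · have h := trace_eq_trP hGp hρ 1 (1 - 1 / α)
    have e : 2 * ((1 - α) / (2 * α)) = 1 - (2 - 1 / α) := by field_simp; ring
    have hh : (((fc hρ.1 (pw ((1 / 2 : ℝ) : ℂ)) * fc hτ.1 (pw (((1 - α) / (2 * α) : ℝ) : ℂ))) *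
        (fc hρ.1 (pw ((1 / 2 : ℝ) : ℂ)) * fc hτ.1 (pw (((1 - α) / (2 * α) : ℝ) : ℂ)))ᴴ) *
          fc hρ.1 (pw ((1 - 1 / α : ℝ) : ℂ))).trace =
        (trP hρ hτ (2 - 1 / α) (1 - (2 - 1 / α)) : ℂ) := by
      rw [prod_self hρ hτ, mul_assoc,
        fc_pw_mulR hρ.1 (1 / 2) (1 - 1 / α) (3 / 2 - 1 / α) (by ring), Matrix.trace_mul_comm,
        ← mul_assoc,
        fc_pw_mulR hρ.1 (3 / 2 - 1 / α) (1 / 2) (2 - 1 / α) (by ring), trace_eq_trP, e]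
    rw [Complex.ofReal_one, fc_pw_one, hh] at h
    exact_mod_cast h.symm
  · rw [prod_self hρ hτ, mul_assoc, fc_pw_mul, add_zero]

lemma trS_second_lt {ρ τ : Matrix n n ℂ} (hρ : ρ.PosSemidef) (hτ : τ.PosSemidef) (hρ1 : ρ.trace = 1)
    {α : ℝ} (hα : 0 < α) (hα1 : α < 1) :
    trS α ρ τ ≤ (trP hρ hτ (2 - 1 / α) (1 - (2 - 1 / α))) ^ α := by
  obtain ⟨Q, hQ, h1, h2, h3⟩ := trP_Q hρ hτ hα
  rw [h1, ← h2]
  have h := aux_rev_holder (ovl hQ.1 hρ.1) hQ.1.eigenvalues hρ.1.eigenvalues (ovl_nonneg _ _)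
    (ovl_row _ _) (ovl_col _ _) hQ.eigenvalues_nonneg hρ.eigenvalues_nonneg α hα hα1
    (fun i j hj => ovl_supp hQ.1 hρ.1 h3 i j hj)
  rw [sum_eig hρ 1 (by simpa using hρ1), Real.one_rpow, mul_one] at h
  refine h.trans (le_of_eq ?_)
  unfold trP
  simp only [rp_eq one_ne_zero, Real.rpow_one]
  rfl

lemma trS_second_gt {ρ τ : Matrix n n ℂ} (hρ : ρ.PosSemidef) (hτ : τ.PosSemidef) (hρ1 : ρ.trace = 1)
    {α : ℝ} (hα1 : 1 < α) :
    trP hρ hτ (2 - 1 / α) (1 - (2 - 1 / α)) ≤ trS α ρ τ ^ (1 / α) := by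
  have hα : 0 < α := by linarith
  obtain ⟨Q, hQ, h1, h2, h3⟩ := trP_Q hρ hτ hα
  rw [h1, ← h2]
  have h := aux_holder2 (ovl hQ.1 hρ.1) (fun i => hQ.1.eigenvalues i ^ α) hρ.1.eigenvalues
    (ovl_nonneg _ _) (fun i => (ovl_row _ _ i).le) (fun i => (ovl_col _ _ i).le)
    (fun i => Real.rpow_nonneg (hQ.eigenvalues_nonneg i) _) hρ.eigenvalues_nonneg (1 / α) (1 - 1 / α)
    (by positivity) (by rw [sub_nonneg, div_le_one hα]; exact hα1.le) (by ring)
  rw [sum_eig hρ 1 (by simpa using hρ1), Real.one_rpow, mul_one] at h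
  refine le_trans ?_ h
  unfold trP
  refine Finset.sum_le_sum fun i _ => Finset.sum_le_sum fun j _ => ?_
  refine mul_le_mul_of_nonneg_left ?_ (ovl_nonneg _ _ _ _)
  rw [rp_eq one_ne_zero, Real.rpow_one, ← Real.rpow_mul (hQ.eigenvalues_nonneg i),
    mul_one_div_cancel hα.ne', Real.rpow_one]
  exact mul_le_mul_of_nonneg_left (rp_le (hρ.eigenvalues_nonneg j) _) (hQ.eigenvalues_nonneg i)

lemma trP_bound_lt {ρ τ : Matrix n n ℂ} (hρ : ρ.PosSemidef) (hτ : τ.PosSemidef) (hρ1 : ρ.trace = 1)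
    {N : ℝ} (hN : τ.trace = N) {γ : ℝ} (h0 : 0 ≤ γ) (h1 : γ < 1) :
    trP hρ hτ γ (1 - γ) ≤ N ^ (1 - γ) := by
  have h := aux_holder2 (ovl hρ.1 hτ.1) hρ.1.eigenvalues hτ.1.eigenvalues
    (ovl_nonneg _ _) (fun i => (ovl_row _ _ i).le) (fun i => (ovl_col _ _ i).le)
    hρ.eigenvalues_nonneg hτ.eigenvalues_nonneg γ (1 - γ) h0 (by linarith) (by ring)
  rw [sum_eig hρ 1 (by simpa using hρ1), Real.one_rpow, one_mul, sum_eig hτ N hN] at h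
  refine le_trans ?_ h
  unfold trP
  refine Finset.sum_le_sum fun i _ => Finset.sum_le_sum fun j _ => ?_
  refine mul_le_mul_of_nonneg_left ?_ (ovl_nonneg _ _ _ _)
  exact mul_le_mul (rp_le (hρ.eigenvalues_nonneg i) _) (rp_le (hτ.eigenvalues_nonneg j) _)
    (rp_nonneg (hτ.eigenvalues_nonneg j) _) (Real.rpow_nonneg (hρ.eigenvalues_nonneg i) _)

lemma trP_bound_gt {ρ τ : Matrix n n ℂ} (hρ : ρ.PosSemidef) (hτ : τ.PosSemidef) (hρ1 : ρ.trace = 1)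
    {N : ℝ} (hN : τ.trace = N) {γ : ℝ} (h1 : 1 < γ) (hs : ρ * fc hτ.1 (pw 0) = ρ) :
    1 ≤ (trP hρ hτ γ (1 - γ)) ^ (1 / γ) * N ^ (1 - 1 / γ) := by
  have hγ : 0 < γ := by linarith
  have h := aux_rev_holder (ovl hρ.1 hτ.1) (fun i => hρ.1.eigenvalues i ^ γ) hτ.1.eigenvalues
    (ovl_nonneg _ _) (ovl_row _ _) (ovl_col _ _)
    (fun i => Real.rpow_nonneg (hρ.eigenvalues_nonneg i) _) hτ.eigenvalues_nonneg (1 / γ)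
    (by positivity) (by rw [div_lt_one hγ]; exact h1) (fun i j hj => by
      rcases mul_eq_zero.1 (ovl_supp hρ.1 hτ.1 hs i j hj) with h | h
      · rw [h, zero_mul]
      · rw [h, Real.zero_rpow hγ.ne', mul_zero])
  have e : ∀ i, (hρ.1.eigenvalues i ^ γ) ^ (1 / γ) = hρ.1.eigenvalues i := fun i => by
    rw [← Real.rpow_mul (hρ.eigenvalues_nonneg i), mul_one_div_cancel hγ.ne', Real.rpow_one]
  simp only [e] at h
  rw [sum_eig hρ 1 (by simpa using hρ1), sum_eig hτ N hN, one_div_one_div] at h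
  refine h.trans (le_of_eq ?_)
  unfold trP
  simp only [rp_eq hγ.ne']
  rfl

lemma renyiDiv_eq {ρ τ : Matrix n n ℂ} (hρ : ρ.PosSemidef) (hτ : τ.PosSemidef) (γ : ℝ) :
    renyiDiv γ ρ τ = (γ - 1)⁻¹ * Real.log (trP hρ hτ γ (1 - γ)) := by
  unfold renyiDiv
  rw [matRpow_eq hρ, matRpow_eq hτ, trace_eq_trP, Complex.ofReal_re]

lemma sand_eq (ρ τ : Matrix n n ℂ) (α : ℝ) :
    sandwichedRenyiDiv α ρ τ = (α - 1)⁻¹ * Real.log (trS α ρ τ) := rfl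

lemma pair_ineq {ρ τ : Matrix n n ℂ} (hρ : ρ.PosSemidef) (hτ : τ.PosSemidef) (hρ1 : ρ.trace = 1)
    {N : ℝ} (hN : τ.trace = N) (hN1 : 1 ≤ N) {α : ℝ} (hα : 1 / 2 ≤ α) (hα1 : α ≠ 1)
    (hs : 1 < α → ρ * fc hτ.1 (pw 0) = ρ) :
    -renyiDiv α ρ τ ≤ -sandwichedRenyiDiv α ρ τ ∧
      -sandwichedRenyiDiv α ρ τ ≤ -renyiDiv (2 - 1 / α) ρ τ ∧
      -renyiDiv (2 - 1 / α) ρ τ ≤ Real.log N := by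
  have hα0 : 0 < α := by linarith
  have hγ : 2 - 1 / α - 1 = (α - 1) / α := by field_simp; ring
  have hN0 : 0 < N := by linarith
  have hlogN : 0 ≤ Real.log N := Real.log_nonneg hN1
  rw [renyiDiv_eq hρ hτ, renyiDiv_eq hρ hτ, sand_eq]
  rcases lt_or_gt_of_ne hα1 with hlt | hgt
  · have a1 := trS_ge hρ hτ hα hlt
    have a2 := trS_second_lt hρ hτ hρ1 hα0 hlt
    have hγ0 : 0 ≤ 2 - 1 / α := by
      rw [sub_nonneg, div_le_iff₀ hα0]; linarith
    have hγ1 : 2 - 1 / α < 1 := by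
      have : 1 < 1 / α := by rw [lt_div_iff₀ hα0]; linarith
      linarith
    have a3 := trP_bound_lt hρ hτ hρ1 hN hγ0 hγ1
    rcases (trP_nonneg hρ hτ α (1 - α)).eq_or_lt with h0 | hpos
    · have z1 := trP_zero hρ hτ _ _ (2 - 1 / α) (1 - (2 - 1 / α)) h0.symm
      rw [z1, Real.zero_rpow hα0.ne'] at a2
      have z2 : trS α ρ τ = 0 := le_antisymm a2 (h0 ▸ a1)
      rw [z1, z2, ← h0]
      simp [hlogN]
    · have hS : 0 < trS α ρ τ := hpos.trans_le a1
      have hR : 0 < trP hρ hτ (2 - 1 / α) (1 - (2 - 1 / α)) := by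
        refine lt_of_le_of_ne (trP_nonneg _ _ _ _) fun h => ?_
        rw [← h, Real.zero_rpow hα0.ne'] at a2
        linarith
      have b1 := Real.log_le_log hpos a1
      have b2 := Real.log_le_log hS a2
      have b3 := Real.log_le_log hR a3
      rw [Real.log_rpow hR] at b2
      rw [Real.log_rpow hN0] at b3
      have hc : 0 < (1 - α)⁻¹ := inv_pos.2 (by linarith)
      have e1 : (α - 1)⁻¹ = -(1 - α)⁻¹ := by rw [← inv_neg]; congr 1; ring
      have e2 : (2 - 1 / α - 1)⁻¹ = -((1 - α)⁻¹ * α) := by rw [hγ, inv_div, div_eq_mul_inv, e1]; ring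
      have e3 : 1 - (2 - 1 / α) = (1 - α) / α := by field_simp; ring
      rw [e2, e1]
      refine ⟨by nlinarith, by nlinarith, ?_⟩
      rw [e3] at b3 ⊢
      have b4 := mul_le_mul_of_nonneg_left b3 (mul_nonneg hc.le hα0.le)
      have e4 : (1 - α)⁻¹ * α * ((1 - α) / α * Real.log N) = Real.log N := by
        have : 1 - α ≠ 0 := by linarith
        field_simp
      linarith
  · have a1 := trS_le hρ hτ hgt
    have a2 := trS_second_gt hρ hτ hρ1 hgt
    have hγ1 : 1 < 2 - 1 / α := by
      have : 1 / α < 1 := by rw [div_lt_one hα0]; linarith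
      linarith
    have a3 := trP_bound_gt hρ hτ hρ1 hN hγ1 (hs hgt)
    have hγp : 0 < 2 - 1 / α := by linarith
    have hR : 0 < trP hρ hτ (2 - 1 / α) (1 - (2 - 1 / α)) := by
      refine lt_of_le_of_ne (trP_nonneg _ _ _ _) fun h => ?_
      rw [← h, Real.zero_rpow (by positivity)] at a3
      linarith
    have hS0 : 0 ≤ trS α ρ τ := by
      obtain ⟨Q, hQ, h1, -⟩ := trP_Q hρ hτ hα0
      rw [h1]
      exact Finset.sum_nonneg fun i _ => Real.rpow_nonneg (hQ.eigenvalues_nonneg i) _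
    have hS : 0 < trS α ρ τ := by
      refine lt_of_le_of_ne hS0 fun h => ?_
      rw [← h, Real.zero_rpow (by positivity)] at a2
      linarith
    have b1 := Real.log_le_log hS a1
    have b2 := Real.log_le_log hR a2
    have b3 := Real.log_le_log zero_lt_one a3
    rw [Real.log_rpow hS] at b2
    rw [Real.log_one, Real.log_mul (Real.rpow_pos_of_pos hR _).ne' (Real.rpow_pos_of_pos hN0 _).ne',
      Real.log_rpow hR, Real.log_rpow hN0] at b3
    have hc : 0 < (α - 1)⁻¹ := inv_pos.2 (by linarith)
    refine ⟨by nlinarith, ?_, ?_⟩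
    · have e2 : (2 - 1 / α - 1)⁻¹ = (α - 1)⁻¹ * α := by rw [hγ, inv_div, div_eq_mul_inv]; ring
      rw [e2]
      have b4 := mul_le_mul_of_nonneg_left b2 (mul_nonneg hc.le hα0.le)
      have e4 : (α - 1)⁻¹ * α * (1 / α * Real.log (trS α ρ τ)) =
        (α - 1)⁻¹ * Real.log (trS α ρ τ) := by field_simp
      linarith
    · generalize 2 - 1 / α = γ at *
      have hg : 0 < (γ - 1)⁻¹ := inv_pos.2 (by linarith)
      have b4 := mul_le_mul_of_nonneg_left b3 (mul_nonneg hg.le hγp.le)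
      have hne : γ - 1 ≠ 0 := by linarith
      have e4 : (γ - 1)⁻¹ * γ * (1 / γ * Real.log (trP hρ hτ γ (1 - γ)) + (1 - 1 / γ) * Real.log N) =
        (γ - 1)⁻¹ * Real.log (trP hρ hτ γ (1 - γ)) + Real.log N := by field_simp
      rw [e4] at b4
      linarith

end Helpers

section Final

variable {a b : Type*} [Fintype a] [DecidableEq a] [Fintype b] [DecidableEq b]

lemma trFst_eq_sum (M : Matrix (a × b) (a × b) ℂ) :
    trFst M = ∑ i, M.submatrix (Prod.mk i) (Prod.mk i) := by
  ext j k
  rw [Matrix.sum_apply]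
  rfl

lemma trFst_posSemidef {M : Matrix (a × b) (a × b) ℂ} (hM : M.PosSemidef) :
    (trFst M).PosSemidef := by
  rw [trFst_eq_sum]
  exact Matrix.posSemidef_sum _ fun i _ => hM.submatrix _

lemma trFst_trace (M : Matrix (a × b) (a × b) ℂ) : (trFst M).trace = M.trace := by
  simp only [Matrix.trace, Matrix.diag, trFst, Matrix.of_apply]
  rw [Fintype.sum_prod_type, Finset.sum_comm]

/-- A slice embedded in the `i`-th block. -/
def blk (i : a) (w : b → ℂ) : a × b → ℂ := fun p => if p.1 = i then w p.2 else 0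

lemma mulVec_blk (M : Matrix (a × b) (a × b) ℂ) (i : a) (w : b → ℂ) (p : a × b) :
    (M *ᵥ blk i w) p = ∑ j, M p (i, j) * w j := by
  simp only [Matrix.mulVec, dotProduct, blk]
  rw [Fintype.sum_prod_type, Finset.sum_eq_single i]
  · simp
  · intro k _ hk
    simp [hk]
  · simp

lemma blk_dot (i : a) (w : b → ℂ) (v : a × b → ℂ) :
    star (blk i w) ⬝ᵥ v = ∑ j, star (w j) * v (i, j) := by
  simp only [dotProduct, Pi.star_apply, blk]
  rw [Fintype.sum_prod_type, Finset.sum_eq_single i]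
  · simp
  · intro k _ hk
    simp [hk]
  · simp

lemma ker_blk {ρ : Matrix (a × b) (a × b) ℂ} (hρ : ρ.PosSemidef) (w : b → ℂ)
    (hw : trFst ρ *ᵥ w = 0) (i : a) : ρ *ᵥ blk i w = 0 := by
  have h0 : ∑ k, star (blk k w) ⬝ᵥ (ρ *ᵥ blk k w) = 0 := by
    have h1 : star w ⬝ᵥ (trFst ρ *ᵥ w) = ∑ k, star (blk k w) ⬝ᵥ (ρ *ᵥ blk k w) := by
      simp only [blk_dot, mulVec_blk]
      rw [Finset.sum_comm]
      simp only [dotProduct, Pi.star_apply, Matrix.mulVec, trFst, Matrix.of_apply]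
      refine Finset.sum_congr rfl fun j _ => ?_
      rw [← Finset.mul_sum, Finset.sum_comm]
      simp only [Finset.sum_mul]
    rw [← h1, hw, dotProduct_zero]
  rw [Finset.sum_eq_zero_iff_of_nonneg (fun k _ => hρ.dotProduct_mulVec_nonneg _)] at h0
  exact (hρ.dotProduct_mulVec_zero_iff _).1 (h0 i (Finset.mem_univ _))

lemma supp_cond {ρ : Matrix (a × b) (a × b) ℂ} (hρ : ρ.PosSemidef) {σ : Matrix b b ℂ}
    (hτ : ((1 : Matrix a a ℂ) ⊗ₖ σ).PosSemidef)
    (hk : LinearMap.ker σ.mulVecLin ≤ LinearMap.ker (trFst ρ).mulVecLin) :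
    ρ * fc hτ.1 (pw 0) = ρ := by
  have h0 : ((1 : Matrix a a ℂ) ⊗ₖ σ) * (1 - fc hτ.1 (pw 0)) = 0 := by
    have h1 : fc hτ.1 (pw 1) * fc hτ.1 (pw 0) = fc hτ.1 (pw 1) := by rw [fc_pw_mul, add_zero]
    rw [fc_pw_one] at h1
    rw [mul_sub, mul_one, h1, sub_self]
  have h2 : ρ * (1 - fc hτ.1 (pw 0)) = 0 := by
    generalize (1 - fc hτ.1 (pw 0)) = P at h0
    have key : ∀ v : a × b → ℂ, ((1 : Matrix a a ℂ) ⊗ₖ σ) *ᵥ v = 0 → ρ *ᵥ v = 0 := by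
      intro v hv
      have hs : ∀ i, σ *ᵥ (fun j => v (i, j)) = 0 := by
        intro i
        ext j
        have := congrFun hv (i, j)
        simp only [Matrix.mulVec, dotProduct, Matrix.kroneckerMap_apply] at this
        rw [Fintype.sum_prod_type, Finset.sum_eq_single i] at this
        · simpa [Matrix.mulVec, dotProduct] using this
        · intro k _ hk2
          simp [Matrix.one_apply_ne hk2.symm]
        · simp
      have hv2 : v = ∑ i, blk i (fun j => v (i, j)) := by
        ext p
        simp [blk, Finset.sum_apply]
      rw [hv2, Matrix.mulVec_sum]
      refine Finset.sum_eq_zero fun i _ => ker_blk hρ _ ?_ i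
      have : (fun j => v (i, j)) ∈ LinearMap.ker σ.mulVecLin := by
        rw [LinearMap.mem_ker, Matrix.mulVecLin_apply]; exact hs i
      have := hk this
      rwa [LinearMap.mem_ker, Matrix.mulVecLin_apply] at this
    ext p q
    have h3 : ((1 : Matrix a a ℂ) ⊗ₖ σ) *ᵥ (fun r => P r q) = 0 := by
      ext r
      exact congrFun (congrFun h0 r) q
    exact congrFun (key _ h3) p
  rw [mul_sub, mul_one, sub_eq_zero] at h2
  exact h2.symm

end Final

theorem sandwich_up_up {a b : Type*} [Fintype a] [DecidableEq a] [Fintype b] [DecidableEq b]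
    (ρ : Matrix (a × b) (a × b) ℂ) (hρ : ρ.PosSemidef) (hρ1 : ρ.trace = 1)
    (α : ℝ) (hα : (1 : ℝ) / 2 ≤ α) (hα1 : α ≠ 1) :
    condRenyiUp α ρ ≤ condSandwichedRenyiUp α ρ ∧
      condSandwichedRenyiUp α ρ ≤ condRenyiUp (2 - 1 / α) ρ := by
  have hα0 : 0 < α := by linarith
  have hiff : 1 < 2 - 1 / α ↔ 1 < α := by
    constructor
    · intro h
      have : 1 / α < 1 := by linarith
      rwa [div_lt_one hα0] at this
    · intro h
      have : 1 / α < 1 := by rwa [div_lt_one hα0]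
      linarith
  have hN1 : (1 : ℝ) ≤ (Fintype.card a : ℝ) := by
    have hne : Nonempty a := by
      by_contra hcon
      rw [not_nonempty_iff] at hcon
      simp [Matrix.trace] at hρ1
    exact_mod_cast Fintype.card_pos
  have hpair : ∀ σ : Matrix b b ℂ, σ.PosSemidef → σ.trace = 1 →
      (1 < α → LinearMap.ker σ.mulVecLin ≤ LinearMap.ker (trFst ρ).mulVecLin) →
      -renyiDiv α ρ ((1 : Matrix a a ℂ) ⊗ₖ σ) ≤ -sandwichedRenyiDiv α ρ ((1 : Matrix a a ℂ) ⊗ₖ σ) ∧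
      -sandwichedRenyiDiv α ρ ((1 : Matrix a a ℂ) ⊗ₖ σ) ≤
        -renyiDiv (2 - 1 / α) ρ ((1 : Matrix a a ℂ) ⊗ₖ σ) ∧
      -renyiDiv (2 - 1 / α) ρ ((1 : Matrix a a ℂ) ⊗ₖ σ) ≤ Real.log (Fintype.card a : ℝ) := by
    intro σ hσ hσ1 hk
    have hτ : ((1 : Matrix a a ℂ) ⊗ₖ σ).PosSemidef := Matrix.PosSemidef.one.kronecker hσ
    refine pair_ineq hρ hτ hρ1 ?_ hN1 hα hα1 (fun h => supp_cond hρ hτ (hk h))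
    rw [Matrix.trace_kronecker, hσ1, mul_one, Matrix.trace_one]
    simp
  have hB := trFst_posSemidef hρ
  have hB1 : (trFst ρ).trace = 1 := by rw [trFst_trace, hρ1]
  unfold condRenyiUp condSandwichedRenyiUp
  constructor
  · refine csSup_le ⟨_, trFst ρ, hB, hB1, fun _ => le_rfl, rfl⟩ ?_
    rintro x ⟨σ, hσ, hσ1, hk, rfl⟩
    refine (hpair σ hσ hσ1 hk).1.trans (le_csSup ?_ ⟨σ, hσ, hσ1, hk, rfl⟩)
    refine ⟨Real.log (Fintype.card a : ℝ), ?_⟩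
    rintro y ⟨σ', hσ', hσ1', hk', rfl⟩
    exact (hpair σ' hσ' hσ1' hk').2.1.trans (hpair σ' hσ' hσ1' hk').2.2
  · refine csSup_le ⟨_, trFst ρ, hB, hB1, fun _ => le_rfl, rfl⟩ ?_
    rintro x ⟨σ, hσ, hσ1, hk, rfl⟩
    refine (hpair σ hσ hσ1 hk).2.1.trans
      (le_csSup ?_ ⟨σ, hσ, hσ1, fun h => hk (hiff.1 h), rfl⟩)
    refine ⟨Real.log (Fintype.card a : ℝ), ?_⟩
    rintro y ⟨σ', hσ', hσ1', hk', rfl⟩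
    exact (hpair σ' hσ' hσ1' (fun h => hk' (hiff.2 h))).2.2
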